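/- Let A_i ∈ ℝ^{m×d_i} and C_i ∈ ℝ^{p_i×d_i} for i = 1,…,n, with 𝐀 = diag(A₁,…,Aₙ), 𝐂 = diag(C₁,…,Cₙ), 𝐀' = (A₁ ⋯ Aₙ), and let P_{L_m} denote the orthogonal projector of (ℝ^m)^n onto the consensus subspace L_m and P_{ker 𝐂} the orthogonal projector onto ker 𝐂. Suppose μ̃ = (1/n)σ_min+²(𝐀' P_{ker 𝐂}) > 0 and σ_min+²(𝐂) ≥ L_S + μ̃/2, where L_S = (1/n)σ_max²(𝐀'). Then the vertically stacked matrix J = [P_{L_m}𝐀; 𝐂] satisfies σ_min+²(J) ≥ μ̃/2, i.e., ‖Jt‖² ≥ (μ̃/2)‖t‖² for every t in the orthogonal complement of ker J. -/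

import Mathlib

/-!
Split `t = u + v` with `u = P t ∈ ker 𝐂` and `v = t - P t ⊥ ker 𝐂`. Averaging over the blocks gives
`‖J t‖² = (1/n) ‖𝐀' t‖² + ‖𝐂 v‖²` (`sqnorm_stacked`), and Young's inequality gives
`‖𝐀' t‖² ≥ ½ ‖𝐀' u‖² - ‖𝐀' v‖²` (`sqnorm_add_lower`). If `t ⊥ ker J` then `u ⊥ ker (𝐀' P)`,
because `P` maps `ker (𝐀' P)` into `ker J`; hence `‖𝐀' u‖² ≥ n μ̃ ‖u‖²`. Together with
`‖𝐀' v‖² ≤ n L_S ‖v‖²` and `‖𝐂 v‖² ≥ (L_S + μ̃/2) ‖v‖²` the terms in `L_S` cancel and leave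
`(μ̃/2) (‖u‖² + ‖v‖²) = (μ̃/2) ‖t‖²`.

To bound the infimum `sigmaMinPosSq J` from below, it must not be the infimum of the empty set,
which is `0`. As `μ̃ > 0`, there is a unit vector `x ⊥ ker (𝐀' P)`, and `P x` is then a nonzero
vector orthogonal to `ker J`.
-/

open Matrix
open scoped BigOperators

noncomputable section

/-- Squared Euclidean norm of a vector. -/
def sqnorm {ι : Type*} [Fintype ι] (v : ι → ℝ) : ℝ := ∑ i, (v i) ^ 2

/-- Squared largest singular value of a real matrix. -/
def sigmaMaxSq {ι κ : Type*} [Fintype ι] [Fintype κ] (M : Matrix ι κ ℝ) : ℝ :=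
  sSup {r : ℝ | ∃ x : κ → ℝ, sqnorm x = 1 ∧ r = sqnorm (M.mulVec x)}

/-- Squared smallest positive singular value of a real matrix
(infimum of `‖Mx‖²` over unit vectors orthogonal to `ker M`). -/
def sigmaMinPosSq {ι κ : Type*} [Fintype ι] [Fintype κ] (M : Matrix ι κ ℝ) : ℝ :=
  sInf {r : ℝ | ∃ x : κ → ℝ,
    (∀ y : κ → ℝ, M.mulVec y = 0 → x ⬝ᵥ y = 0) ∧ sqnorm x = 1 ∧ r = sqnorm (M.mulVec x)}

/-- Largest eigenvalue of a symmetric real matrix (Rayleigh quotient form). -/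
def lamMax {ι : Type*} [Fintype ι] (M : Matrix ι ι ℝ) : ℝ :=
  sSup {r : ℝ | ∃ x : ι → ℝ, sqnorm x = 1 ∧ r = x ⬝ᵥ M.mulVec x}

/-- Smallest positive eigenvalue of a symmetric PSD real matrix (Rayleigh quotient
over unit vectors orthogonal to the kernel). -/
def lamMinPos {ι : Type*} [Fintype ι] (M : Matrix ι ι ℝ) : ℝ :=
  sInf {r : ℝ | ∃ x : ι → ℝ,
    (∀ y : ι → ℝ, M.mulVec y = 0 → x ⬝ᵥ y = 0) ∧ sqnorm x = 1 ∧ r = x ⬝ᵥ M.mulVec x}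

/-- Block-diagonal matrix `diag(A₁,…,Aₙ)` with row blocks of equal size `m`,
as a matrix from `ℝ^d = Σᵢ ℝ^{dᵢ}` to `(ℝ^m)^n`. -/
def blockDiagA {n m : ℕ} {d : Fin n → ℕ} (A : ∀ i, Matrix (Fin m) (Fin (d i)) ℝ) :
    Matrix (Fin n × Fin m) ((i : Fin n) × Fin (d i)) ℝ :=
  Matrix.of fun p q => if p.1 = q.1 then A q.1 p.2 q.2 else 0

/-- Horizontal concatenation `(A₁ ⋯ Aₙ)`. -/
def hcat {n m : ℕ} {d : Fin n → ℕ} (A : ∀ i, Matrix (Fin m) (Fin (d i)) ℝ) :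
    Matrix (Fin m) ((i : Fin n) × Fin (d i)) ℝ :=
  Matrix.of fun r q => A q.1 r q.2

/-- Kronecker product `W ⊗ I_m`, acting on `(ℝ^m)^n`. -/
def kronW (m : ℕ) {n : ℕ} (W : Matrix (Fin n) (Fin n) ℝ) :
    Matrix (Fin n × Fin m) (Fin n × Fin m) ℝ :=
  Matrix.of fun p q => W p.1 q.1 * (if p.2 = q.2 then 1 else 0)

/-- Kronecker product `I_n ⊗ C`. -/
def kronIdC (n : ℕ) {p d : ℕ} (C : Matrix (Fin p) (Fin d) ℝ) :
    Matrix (Fin n × Fin p) (Fin n × Fin d) ℝ :=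
  Matrix.of fun pq q => (if pq.1 = q.1 then (1 : ℝ) else 0) * C pq.2 q.2

/-- The orthogonal projector of `(ℝ^m)^n` onto the consensus subspace
`L_m = {(y₁,…,yₙ) : y₁ = ⋯ = yₙ}` (each block is replaced by the average). -/
def consensusProj (n m : ℕ) : Matrix (Fin n × Fin m) (Fin n × Fin m) ℝ :=
  Matrix.of fun p q => (if p.2 = q.2 then (1 : ℝ) else 0) / n

theorem sqnorm_eq_dot {ι : Type*} [Fintype ι] (v : ι → ℝ) : sqnorm v = v ⬝ᵥ v := by
  simp [sqnorm, dotProduct, sq]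

theorem sqnorm_nonneg {ι : Type*} [Fintype ι] (v : ι → ℝ) : 0 ≤ sqnorm v :=
  Finset.sum_nonneg fun _ _ => sq_nonneg _

theorem sqnorm_eq_zero {ι : Type*} [Fintype ι] {v : ι → ℝ} (h : sqnorm v = 0) : v = 0 := by
  rw [sqnorm_eq_dot] at h
  exact dotProduct_self_eq_zero.mp h

theorem sqnorm_smul {ι : Type*} [Fintype ι] (c : ℝ) (v : ι → ℝ) :
    sqnorm (c • v) = c ^ 2 * sqnorm v := by
  simp [sqnorm, Finset.mul_sum, mul_pow]

theorem sqnorm_normalize {ι : Type*} [Fintype ι] {v : ι → ℝ} (h : v ≠ 0) :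
    sqnorm ((Real.sqrt (sqnorm v))⁻¹ • v) = 1 := by
  have hne : sqnorm v ≠ 0 := fun h0 => h (sqnorm_eq_zero h0)
  rw [sqnorm_smul, inv_pow, Real.sq_sqrt (sqnorm_nonneg v), inv_mul_cancel₀ hne]

theorem sqnorm_mulVec_normalize {ι κ : Type*} [Fintype ι] [Fintype κ] (M : Matrix ι κ ℝ)
    (v : κ → ℝ) :
    sqnorm (M *ᵥ ((Real.sqrt (sqnorm v))⁻¹ • v)) = (sqnorm v)⁻¹ * sqnorm (M *ᵥ v) := by
  rw [mulVec_smul, sqnorm_smul, inv_pow, Real.sq_sqrt (sqnorm_nonneg v)]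

theorem sqnorm_add_lower {ι : Type*} [Fintype ι] (a b : ι → ℝ) :
    1 / 2 * sqnorm a - sqnorm b ≤ sqnorm (a + b) := by
  simp only [sqnorm, Finset.mul_sum, ← Finset.sum_sub_distrib, Pi.add_apply]
  refine Finset.sum_le_sum fun i _ => ?_
  nlinarith [sq_nonneg (a i + 2 * b i)]

/-- Cauchy–Schwarz on each row: the squared Frobenius norm bounds `‖M x‖²` on the unit sphere. It
makes the supremum defining `sigmaMaxSq` a genuine one. -/
theorem bddAbove_sigmaMaxSq {ι κ : Type*} [Fintype ι] [Fintype κ] (M : Matrix ι κ ℝ) :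
    BddAbove {r : ℝ | ∃ x : κ → ℝ, sqnorm x = 1 ∧ r = sqnorm (M.mulVec x)} := by
  refine ⟨∑ i, ∑ j, M i j ^ 2, ?_⟩
  rintro r ⟨x, hx, rfl⟩
  refine Finset.sum_le_sum fun i _ => ?_
  have h := Finset.sum_mul_sq_le_sq_mul_sq Finset.univ (M i) x
  rw [show ∑ j, x j ^ 2 = 1 from hx, mul_one] at h
  exact h

theorem sqnorm_mulVec_le_sigmaMaxSq {ι κ : Type*} [Fintype ι] [Fintype κ] (M : Matrix ι κ ℝ)
    (x : κ → ℝ) : sqnorm (M *ᵥ x) ≤ sigmaMaxSq M * sqnorm x := by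
  by_cases hx : x = 0
  · simp [hx, sqnorm]
  have hpos : 0 < sqnorm x :=
    lt_of_le_of_ne (sqnorm_nonneg x) fun h0 => hx (sqnorm_eq_zero h0.symm)
  have h := le_csSup (bddAbove_sigmaMaxSq M) ⟨_, sqnorm_normalize hx, rfl⟩
  rwa [sqnorm_mulVec_normalize, inv_mul_le_iff₀ hpos, mul_comm] at h

theorem sigmaMinPosSq_mul_le {ι κ : Type*} [Fintype ι] [Fintype κ] (M : Matrix ι κ ℝ)
    (x : κ → ℝ) (hker : ∀ y : κ → ℝ, M *ᵥ y = 0 → x ⬝ᵥ y = 0) :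
    sigmaMinPosSq M * sqnorm x ≤ sqnorm (M *ᵥ x) := by
  by_cases hx : x = 0
  · simp [hx, sqnorm]
  have hpos : 0 < sqnorm x :=
    lt_of_le_of_ne (sqnorm_nonneg x) fun h0 => hx (sqnorm_eq_zero h0.symm)
  have hbdd : BddBelow {r : ℝ | ∃ x : κ → ℝ, (∀ y : κ → ℝ, M.mulVec y = 0 → x ⬝ᵥ y = 0) ∧
      sqnorm x = 1 ∧ r = sqnorm (M.mulVec x)} := by
    refine ⟨0, ?_⟩
    rintro r ⟨x, -, -, rfl⟩
    exact sqnorm_nonneg _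
  have h := csInf_le hbdd ⟨(Real.sqrt (sqnorm x))⁻¹ • x,
    fun y hy => by rw [smul_dotProduct, hker y hy, smul_zero], sqnorm_normalize hx, rfl⟩
  rwa [sqnorm_mulVec_normalize, le_inv_mul_iff₀ hpos, mul_comm] at h

theorem consensus_mulVec {n m : ℕ} {d : Fin n → ℕ}
    (A : ∀ i : Fin n, Matrix (Fin m) (Fin (d i)) ℝ) (t : ((i : Fin n) × Fin (d i)) → ℝ)
    (q : Fin n × Fin m) :
    ((consensusProj n m * blockDiagA A) *ᵥ t) q = 1 / (n : ℝ) * (hcat A *ᵥ t) q.2 := by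
  simp only [mulVec, dotProduct, Finset.mul_sum]
  refine Finset.sum_congr rfl fun k _ => ?_
  simp only [Matrix.mul_apply, consensusProj, blockDiagA, hcat, Matrix.of_apply,
    Fintype.sum_prod_type]
  rw [Finset.sum_eq_single k.1 (fun b _ hb => by simp [hb]) (by simp),
    Finset.sum_eq_single q.2 (fun b _ hb => by simp [Ne.symm hb]) (by simp)]
  simp [mul_assoc]

theorem sqnorm_stacked {n m : ℕ} (hn : (n : ℝ) ≠ 0) {d : Fin n → ℕ}
    (A : ∀ i : Fin n, Matrix (Fin m) (Fin (d i)) ℝ) {κ : Type*} [Fintype κ]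
    (D : Matrix κ ((i : Fin n) × Fin (d i)) ℝ) (t : ((i : Fin n) × Fin (d i)) → ℝ) :
    sqnorm (fromRows (consensusProj n m * blockDiagA A) D *ᵥ t) =
      1 / (n : ℝ) * sqnorm (hcat A *ᵥ t) + sqnorm (D *ᵥ t) := by
  rw [fromRows_mulVec]
  simp only [sqnorm, Fintype.sum_sum_type, Sum.elim_inl, Sum.elim_inr, consensus_mulVec,
    Fintype.sum_prod_type, mul_pow, ← Finset.mul_sum, Finset.sum_const, Finset.card_univ,
    Fintype.card_fin, nsmul_eq_mul]
  field_simp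

theorem stacked_mulVec_eq_zero_iff {n m : ℕ} (hn : 0 < (n : ℝ)) {d : Fin n → ℕ}
    (A : ∀ i : Fin n, Matrix (Fin m) (Fin (d i)) ℝ) {κ : Type*} [Fintype κ]
    (D : Matrix κ ((i : Fin n) × Fin (d i)) ℝ) (t : ((i : Fin n) × Fin (d i)) → ℝ) :
    fromRows (consensusProj n m * blockDiagA A) D *ᵥ t = 0 ↔
      hcat A *ᵥ t = 0 ∧ D *ᵥ t = 0 := by
  have h := sqnorm_stacked hn.ne' A D t
  have h1 : 0 < 1 / (n : ℝ) := by positivity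
  have h2 := sqnorm_nonneg (hcat A *ᵥ t)
  have h3 := sqnorm_nonneg (D *ᵥ t)
  constructor
  · intro h0
    rw [h0, show sqnorm (0 : (Fin n × Fin m) ⊕ κ → ℝ) = 0 by simp [sqnorm]] at h
    have h4 : 0 ≤ 1 / (n : ℝ) * sqnorm (hcat A *ᵥ t) := mul_nonneg h1.le h2
    have h5 : 1 / (n : ℝ) * sqnorm (hcat A *ᵥ t) = 0 := by linarith
    exact ⟨sqnorm_eq_zero ((mul_eq_zero.mp h5).resolve_left h1.ne'),
      sqnorm_eq_zero (by linarith)⟩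
  · rintro ⟨hA, hD⟩
    apply sqnorm_eq_zero
    rw [h, hA, hD]
    simp [sqnorm]

/-- lower bound `σ_min+²(J) ≥ μ̃/2` for the stacked matrix
`J = [P_{L_m}𝐀; 𝐂]`. -/
theorem stacked_projector_sigmaMinPos_lower {n m : ℕ} (d p : Fin n → ℕ)
    (A : ∀ i : Fin n, Matrix (Fin m) (Fin (d i)) ℝ)
    (C : ∀ i : Fin n, Matrix (Fin (p i)) (Fin (d i)) ℝ)
    -- P is the orthogonal projector onto ker 𝐂
    (P : Matrix ((i : Fin n) × Fin (d i)) ((i : Fin n) × Fin (d i)) ℝ)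
    (hP_symm : Pᵀ = P)
    (hP_ker : ∀ x, (Matrix.blockDiagonal' C).mulVec (P.mulVec x) = 0)
    (hP_fix : ∀ x, (Matrix.blockDiagonal' C).mulVec x = 0 → P.mulVec x = x)
    (tμ : ℝ) (htμ : tμ = 1 / (n : ℝ) * sigmaMinPosSq (hcat A * P)) (htμ_pos : 0 < tμ)
    (LS : ℝ) (hLS : LS = 1 / (n : ℝ) * sigmaMaxSq (hcat A))
    (hC : LS + tμ / 2 ≤ sigmaMinPosSq (Matrix.blockDiagonal' C))
    (J : Matrix ((Fin n × Fin m) ⊕ ((i : Fin n) × Fin (p i)))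
      ((i : Fin n) × Fin (d i)) ℝ)
    (hJ : J = Matrix.fromRows (consensusProj n m * blockDiagA A) (Matrix.blockDiagonal' C)) :
    tμ / 2 ≤ sigmaMinPosSq J ∧
    ∀ t : ((i : Fin n) × Fin (d i)) → ℝ,
      (∀ w, J.mulVec w = 0 → t ⬝ᵥ w = 0) →
      tμ / 2 * sqnorm t ≤ sqnorm (J.mulVec t) := by
  have hn : 0 < (n : ℝ) := by
    refine lt_of_le_of_ne (Nat.cast_nonneg n) fun h0 => ?_
    rw [← h0] at htμ
    simp only [div_zero, zero_mul] at htμ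
    exact htμ_pos.ne' htμ
  have hsymm : ∀ x y, (P *ᵥ x) ⬝ᵥ y = x ⬝ᵥ (P *ᵥ y) := fun x y => by
    rw [dotProduct_mulVec, ← mulVec_transpose, hP_symm]
  have hkerJ : ∀ w, J *ᵥ w = 0 ↔ hcat A *ᵥ w = 0 ∧ blockDiagonal' C *ᵥ w = 0 := fun w => by
    rw [hJ]
    exact stacked_mulVec_eq_zero_iff hn A _ w
  have hμ : sigmaMinPosSq (hcat A * P) = n * tμ := by
    rw [htμ]
    field_simp
  have hL : sigmaMaxSq (hcat A) = n * LS := by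
    rw [hLS]
    field_simp
  have key : ∀ t : ((i : Fin n) × Fin (d i)) → ℝ, (∀ w, J *ᵥ w = 0 → t ⬝ᵥ w = 0) →
      tμ / 2 * sqnorm t ≤ sqnorm (J *ᵥ t) := by
    intro t ht
    obtain ⟨u, hu⟩ : ∃ u, u = P *ᵥ t := ⟨_, rfl⟩
    obtain ⟨v, hv⟩ : ∃ v, v = t - u := ⟨_, rfl⟩
    have htuv : t = u + v := by rw [hv]; abel
    have hCu : blockDiagonal' C *ᵥ u = 0 := hu ▸ hP_ker t
    have hPu : P *ᵥ u = u := hP_fix u hCu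
    have hvker : ∀ y, blockDiagonal' C *ᵥ y = 0 → v ⬝ᵥ y = 0 := fun y hy => by
      rw [hv, sub_dotProduct, hu, hsymm, hP_fix y hy, sub_self]
    have huker : ∀ y, (hcat A * P) *ᵥ y = 0 → u ⬝ᵥ y = 0 := fun y hy => by
      rw [hu, hsymm]
      exact ht _ ((hkerJ _).mpr ⟨by rwa [mulVec_mulVec], hP_ker y⟩)
    have hnorm : sqnorm t = sqnorm u + sqnorm v := by
      have h0 := hvker u hCu
      rw [sqnorm_eq_dot t, htuv, add_dotProduct, dotProduct_add, dotProduct_add,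
        dotProduct_comm u v, h0, sqnorm_eq_dot, sqnorm_eq_dot]
      ring
    have hAu := sigmaMinPosSq_mul_le _ u huker
    rw [hμ, ← mulVec_mulVec, hPu] at hAu
    have hAv := sqnorm_mulVec_le_sigmaMaxSq (hcat A) v
    rw [hL] at hAv
    have hCv := (mul_le_mul_of_nonneg_right hC (sqnorm_nonneg v)).trans
      (sigmaMinPosSq_mul_le _ v hvker)
    have hY := sqnorm_add_lower (hcat A *ᵥ u) (hcat A *ᵥ v)
    have hA : tμ / 2 * sqnorm u - LS * sqnorm v ≤
        1 / (n : ℝ) * sqnorm (hcat A *ᵥ u + hcat A *ᵥ v) := by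
      rw [one_div, le_inv_mul_iff₀ hn]
      linarith
    rw [hnorm, hJ, sqnorm_stacked hn.ne', htuv, mulVec_add, mulVec_add, hCu, zero_add]
    linarith
  refine ⟨?_, key⟩
  have hpos : 0 < sigmaMinPosSq (hcat A * P) := hμ ▸ mul_pos hn htμ_pos
  -- The infimum of the empty set is `0`, so positivity provides an admissible unit vector.
  obtain ⟨-, x, hxker, hx1, -⟩ : {r : ℝ | ∃ x : ((i : Fin n) × Fin (d i)) → ℝ,
      (∀ y, (hcat A * P).mulVec y = 0 → x ⬝ᵥ y = 0) ∧ sqnorm x = 1 ∧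
        r = sqnorm ((hcat A * P).mulVec x)}.Nonempty := by
    by_contra hne
    rw [sigmaMinPosSq, Set.not_nonempty_iff_eq_empty.mp hne, Real.sInf_empty] at hpos
    exact hpos.false
  have hPx : P *ᵥ x ≠ 0 := fun h0 => by
    have h := hxker x (by rw [← mulVec_mulVec, h0, mulVec_zero])
    rw [← sqnorm_eq_dot, hx1] at h
    exact one_ne_zero h
  have hPxker : ∀ w, J *ᵥ w = 0 → (P *ᵥ x) ⬝ᵥ w = 0 := fun w hw => by
    obtain ⟨hAw, hCw⟩ := (hkerJ w).mp hw
    have hPw := hP_fix w hCw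
    rw [hsymm, hPw]
    exact hxker w (by rw [← mulVec_mulVec, hPw, hAw])
  refine le_csInf ⟨_, (Real.sqrt (sqnorm (P *ᵥ x)))⁻¹ • (P *ᵥ x),
    fun y hy => by rw [smul_dotProduct, hPxker y hy, smul_zero], sqnorm_normalize hPx, rfl⟩ ?_
  rintro r ⟨t, ht, ht1, rfl⟩
  have h := key t ht
  rwa [ht1, mul_one] at h
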